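/- Assume αχ(M) ≤ 0 and let r* ∈ Ω be a constant α-curvature metric (K_i(r*) = s_α(r*)·(r*_i)^α for all i). Then there is a neighborhood U of r* in Ω such that every solution r(t) of the α-flow with r(0) ∈ U and Π_{i=1}^N r_i(0) = Π_{i=1}^N r*_i exists for all time t ≥ 0 and converges exponentially fast to r*, i.e. there exist C, β > 0 with ‖r(t) − r*‖ ≤ C e^{−βt} for all t ≥ 0. -/

import Mathlib

/-!
In the coordinates `u = log r` the α-flow is `du/dt = field u`, and `us = log rstar` is a zero of the
vector field. The proof shows that `V(u) = ∑ (uᵢ - usᵢ)²` is a strict Lyapunov function near `us` on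
the hyperplane `∑ uᵢ = ∑ usᵢ`, which is the condition on the product of the radii.

* The hyperplane is invariant: the angles of each face sum to `π`, so the total curvature does not
  depend on the metric, and at `rstar` it equals the sum of the `s_α rᵢ ^ α`, which is `2πχ(M)`
  for every metric (`sum_field_eq_zero`).
* The linearisation is negative on nonzero vectors `v` with zero sum (`field_form_neg`). The term
  `s_α r ^ α` contributes `αχ(M) ≤ 0` times a Cauchy–Schwarz gap (`hasDerivAt_weight`). The curvature
  term is a sum over faces, and each face contributes a negative semidefinite form whose kernel
  consists of the vectors constant on that face. This is Guo's infinitesimal rigidity of inversive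
  distance packings; it rests on an explicit formula for a `2 × 2` determinant
  (`triangle_form_neg`). As the 1-skeleton is connected, the sum over faces vanishes on constant
  vectors only.
* Hence there is `β > 0` with `∑ (uᵢ - usᵢ) * field u i ≤ -β V(u)` near `us` on the hyperplane
  (`exists_dissipative`), and comparison with an exponential barrier gives decay of `V` (`decay`).
  Applied to a truncated vector field, which has global solutions by Picard–Lindelöf, the same
  estimate yields global existence (`exists_confined_solution`).
-/

open Real Filter Topology

namespace IDCP

variable {N : ℕ}

/-- The set of edges: 2-element subsets of vertices contained in some face. -/
def edges (Fc : Finset (Finset (Fin N))) : Finset (Finset (Fin N)) :=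
  Fc.biUnion fun f => f.powersetCard 2

/-- `Fc` is the face set of a triangulation of a closed connected surface:
every face has 3 vertices, every edge lies in exactly two faces, and the
1-skeleton is connected. -/
structure IsTriangulation (Fc : Finset (Finset (Fin N))) : Prop where
  card3 : ∀ f ∈ Fc, f.card = 3
  edge2 : ∀ e ∈ edges Fc, (Fc.filter fun f => e ⊆ f).card = 2
  conn : (SimpleGraph.fromRel fun i j => ({i, j} : Finset (Fin N)) ∈ edges Fc).Connected

/-- Euler characteristic χ(M) = N − |E| + |F|. -/
def chi (Fc : Finset (Finset (Fin N))) : ℤ :=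
  (N : ℤ) - ((edges Fc).card : ℤ) + (Fc.card : ℤ)

/-- Edge length l_ij = √(r_i² + r_j² + 2 r_i r_j I_{ij}). -/
noncomputable def len (I : Finset (Fin N) → ℝ) (r : Fin N → ℝ) (i j : Fin N) : ℝ :=
  Real.sqrt (r i ^ 2 + r j ^ 2 + 2 * r i * r j * I {i, j})

/-- The cosine of the inner angle at `i` in triangle `{i,j,k}`. -/
noncomputable def cosAng (I : Finset (Fin N) → ℝ) (r : Fin N → ℝ) (i j k : Fin N) : ℝ :=
  (len I r i j ^ 2 + len I r i k ^ 2 - len I r j k ^ 2) / (2 * len I r i j * len I r i k)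

/-- The auxiliary function Λ. -/
noncomputable def Lam (x : ℝ) : ℝ :=
  if x ≤ -1 then π else if x ≤ 1 then Real.arccos x else 0

/-- Discrete Gaussian curvature K_i = 2π − Σ_{{i,j,k}∈F} θ_i^{jk}.  Every face
containing `i` appears exactly twice (once for each ordering of `j,k`), whence
the factor 1/2. -/
noncomputable def K (Fc : Finset (Finset (Fin N))) (I : Finset (Fin N) → ℝ)
    (r : Fin N → ℝ) (i : Fin N) : ℝ :=
  2 * π - (1 / 2) * ∑ j, ∑ k,
    (if ({i, j, k} : Finset (Fin N)) ∈ Fc then Real.arccos (cosAng I r i j k) else 0)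

/-- Extended curvature K̃_i = 2π − Σ θ̃_i^{jk}, using the generalized angles Λ. -/
noncomputable def Kt (Fc : Finset (Finset (Fin N))) (I : Finset (Fin N) → ℝ)
    (r : Fin N → ℝ) (i : Fin N) : ℝ :=
  2 * π - (1 / 2) * ∑ j, ∑ k,
    (if ({i, j, k} : Finset (Fin N)) ∈ Fc then Lam (cosAng I r i j k) else 0)

/-- The set Ω of inversive distance circle packing metrics. -/
def Omega (Fc : Finset (Finset (Fin N))) (I : Finset (Fin N) → ℝ) : Set (Fin N → ℝ) :=
  {r | (∀ i, 0 < r i) ∧ ∀ i j k : Fin N, ({i, j, k} : Finset (Fin N)) ∈ Fc →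
    len I r j k < len I r i j + len I r i k}

/-- s_α = 2πχ(M)/‖r‖_α^α. -/
noncomputable def sA (Fc : Finset (Finset (Fin N))) (α : ℝ) (r : Fin N → ℝ) : ℝ :=
  2 * π * (chi Fc : ℝ) / ∑ j, r j ^ α

/-- Back from u-coordinates: r_i = e^{u_i}. -/
noncomputable def rOf (u : Fin N → ℝ) : Fin N → ℝ := fun i => Real.exp (u i)

/-- ln Ω, the image of Ω under the coordinate change r ↦ u, u_i = ln r_i. -/
def lnOmega (Fc : Finset (Finset (Fin N))) (I : Finset (Fin N) → ℝ) : Set (Fin N → ℝ) :=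
  {u | rOf u ∈ Omega Fc I}

/-- `u` solves the α-flow du_i/dt = s_α r_i^α − K_i on the time set `D`,
staying in ln Ω. -/
def IsFlowSol (Fc : Finset (Finset (Fin N))) (I : Finset (Fin N) → ℝ) (α : ℝ)
    (D : Set ℝ) (u : ℝ → Fin N → ℝ) : Prop :=
  ∀ t ∈ D, rOf (u t) ∈ Omega Fc I ∧
    ∀ i, HasDerivWithinAt (fun s => u s i)
      (sA Fc α (rOf (u t)) * rOf (u t) i ^ α - K Fc I (rOf (u t)) i) D t

/-- `u` solves the extended α-flow du_i/dt = s_α r_i^α − K̃_i on the time set `D`. -/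
def IsExtFlowSol (Fc : Finset (Finset (Fin N))) (I : Finset (Fin N) → ℝ) (α : ℝ)
    (D : Set ℝ) (u : ℝ → Fin N → ℝ) : Prop :=
  ∀ t ∈ D, ∀ i, HasDerivWithinAt (fun s => u s i)
      (sA Fc α (rOf (u t)) * rOf (u t) i ^ α - Kt Fc I (rOf (u t)) i) D t

/-- Lk(A): pairs (e,v) with both endpoints of e outside A, v ∈ A, and e,v spanning a face. -/
def Lk (Fc : Finset (Finset (Fin N))) (A : Finset (Fin N)) :
    Finset (Finset (Fin N) × Fin N) :=
  ((edges Fc) ×ˢ (Finset.univ : Finset (Fin N))).filter fun p =>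
    (∀ x ∈ p.1, x ∉ A) ∧ p.2 ∈ A ∧ insert p.2 p.1 ∈ Fc

/-- Euler characteristic χ(F_A) of the subcomplex spanned by A. -/
def chiSub (Fc : Finset (Finset (Fin N))) (A : Finset (Fin N)) : ℤ :=
  (A.card : ℤ) - (((edges Fc).filter (fun e => e ⊆ A)).card : ℤ)
    + ((Fc.filter (fun f => f ⊆ A)).card : ℤ)

/-- The lower bound −Σ_{(e,v)∈Lk(A)}(π − Λ(I_e)) + 2πχ(F_A) defining Y_A. -/
noncomputable def Ybound (Fc : Finset (Finset (Fin N))) (I : Finset (Fin N) → ℝ)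
    (A : Finset (Fin N)) : ℝ :=
  -(∑ p ∈ Lk Fc A, (π - Lam (I p.1))) + 2 * π * (chiSub Fc A : ℝ)

/-- x ∈ Y. -/
noncomputable def memY (Fc : Finset (Finset (Fin N))) (I : Finset (Fin N) → ℝ)
    (x : Fin N → ℝ) : Prop :=
  (∑ i, x i) = 2 * π * (chi Fc : ℝ) ∧
    ∀ A : Finset (Fin N), A.Nonempty → A ≠ Finset.univ → Ybound Fc I A < ∑ i ∈ A, x i

/-- x ∈ Ȳ. -/
noncomputable def memYbar (Fc : Finset (Finset (Fin N))) (I : Finset (Fin N) → ℝ)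
    (x : Fin N → ℝ) : Prop :=
  (∑ i, x i) = 2 * π * (chi Fc : ℝ) ∧
    ∀ A : Finset (Fin N), A.Nonempty → A ≠ Finset.univ → Ybound Fc I A ≤ ∑ i ∈ A, x i

/-! ### The angle form of a single triangle -/

/-- Sylvester-type criterion for a `2 × 2` form `[[A, -B], [-B, C]]` of positive determinant: it is
enough that the form is positive at one of the vectors `(1, 0)`, `(0, 1)`, `(1, 1)`. -/
lemma quad_form_neg {A B C : ℝ} (hdet : 0 < A * C - B ^ 2)
    (hpos : 0 < A ∨ 0 < C ∨ 0 < A + C - 2 * B) (s t : ℝ) :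
    -A * s ^ 2 + 2 * B * s * t - C * t ^ 2 ≤ 0 ∧
      (-A * s ^ 2 + 2 * B * s * t - C * t ^ 2 = 0 → s = 0 ∧ t = 0) := by
  have hAC : 0 < A * C := by nlinarith [sq_nonneg B]
  have hA : 0 < A := by
    rcases hpos with h | h | h
    · exact h
    · exact pos_of_mul_pos_left hAC h.le
    · by_contra hA
      have hA' : A < 0 := lt_of_le_of_ne (not_lt.mp hA) (by rintro rfl; simp at hAC)
      have hC' : C < 0 := by
        by_contra hC
        nlinarith [mul_nonneg (neg_nonneg.mpr hA'.le) (not_lt.mp hC)]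
      have h2 : (2 * B) ^ 2 < (A + C) ^ 2 := by nlinarith [sq_nonneg (A - C)]
      nlinarith [abs_lt.mp (sq_lt_sq.mp h2), abs_of_neg (show A + C < 0 by linarith),
        neg_abs_le (2 * B), sq_lt_sq.mp h2]
  have key : A * (-A * s ^ 2 + 2 * B * s * t - C * t ^ 2)
      = -((A * s - B * t) ^ 2 + (A * C - B ^ 2) * t ^ 2) := by ring
  refine ⟨?_, fun h0 => ?_⟩
  · by_contra h
    have := mul_pos hA (not_le.mp h)
    nlinarith [sq_nonneg (A * s - B * t), mul_nonneg hdet.le (sq_nonneg t)]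
  · rw [h0] at key
    have ht2 : (A * C - B ^ 2) * t ^ 2 = 0 := by
      nlinarith [sq_nonneg (A * s - B * t), mul_nonneg hdet.le (sq_nonneg t)]
    have ht : t = 0 := by
      rcases mul_eq_zero.mp ht2 with h | h
      · exact absurd h hdet.ne'
      · exact pow_eq_zero_iff (two_ne_zero) |>.mp h
    subst ht
    have : A * s = 0 := by
      have : (A * s) ^ 2 = 0 := by nlinarith
      exact pow_eq_zero_iff (two_ne_zero) |>.mp this
    exact ⟨(mul_eq_zero.mp this).resolve_left hA.ne', rfl⟩

/-- Heron's polynomial in the squared side lengths `x, y, z`: sixteen times the squared area of the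
triangle. -/
def heron (x y z : ℝ) : ℝ := 2 * x * y + 2 * y * z + 2 * z * x - x ^ 2 - y ^ 2 - z ^ 2

/-- The first variation of a triangle angle, multiplied by four times the area: `p, q` are the
squared lengths of the sides adjacent to the angle, `o` that of the opposite side, and
`dp, dq, dO` are their first variations (see `hasDerivAt_ang`). -/
noncomputable def dAng (p q o dp dq dO : ℝ) : ℝ :=
  dO - dp * (p + o - q) / (2 * p) - dq * (q + o - p) / (2 * q)

/-- The quadratic form `∑ vᵢ dθᵢ` of a triangle is negative semidefinite, with kernel the constant
vectors. The squared side lengths `x, y, z` are opposite to the vertices `1, 2, 3`, and each splits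
into one part per endpoint (`x = x2 + x3` and cyclically), the splitting describing how the side
reacts to a change of the logarithmic radii `v`. All parts are positive because the inversive
distances are nonnegative, and `hcomp` says that the points dividing each side in the proportion of
its two parts are the feet of perpendiculars from a common point.

Modulo constants the form has two variables, and its determinant is
`heron x y z * (x2 * y3 * z1 + x3 * y1 * z2) / (x * y * z) > 0`, so it is definite. Its sign can be
read off from one of the three diagonal entries of the full form, because at most one angle of a
triangle is obtuse. -/
lemma triangle_form_neg {x2 x3 y1 y3 z1 z2 : ℝ} (hx2 : 0 < x2) (hx3 : 0 < x3) (hy1 : 0 < y1)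
    (hy3 : 0 < y3) (hz1 : 0 < z1) (hz2 : 0 < z2) (hcomp : x2 + y3 + z1 = x3 + y1 + z2)
    {x y z : ℝ} (hx : x = x2 + x3) (hy : y = y1 + y3) (hz : z = z1 + z2)
    (hH : 0 < heron x y z) (v1 v2 v3 : ℝ) {dx dy dz : ℝ}
    (hdx : dx = 2 * (x2 * v2 + x3 * v3)) (hdy : dy = 2 * (y1 * v1 + y3 * v3))
    (hdz : dz = 2 * (z1 * v1 + z2 * v2)) {Q : ℝ}
    (hQ : Q = v1 * dAng z y x dz dy dx + v2 * dAng x z y dx dz dy + v3 * dAng y x z dy dx dz) :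
    Q ≤ 0 ∧ (Q = 0 → v1 = v2 ∧ v2 = v3) := by
  have hx0 : 0 < x := by linarith
  have hy0 : 0 < y := by linarith
  have hz0 : 0 < z := by linarith
  set A := (x + y - z) * y1 / y + (x + z - y) * z1 / z with hA
  set C := (x + y - z) * x2 / x + (y + z - x) * z2 / z with hC
  set B := x2 + y1 - (z1 * (y + z - x) + z2 * (x + z - y)) / (2 * z) with hB
  have hQ' : Q = -A * (v1 - v3) ^ 2 + 2 * B * (v1 - v3) * (v2 - v3) - C * (v2 - v3) ^ 2 := by
    rw [hQ, hdx, hdy, hdz, hA, hB, hC, dAng, dAng, dAng]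
    field_simp
    have e : z2 = x2 + y3 + z1 - x3 - y1 := by linarith
    rw [hx, hy, hz, e]
    ring
  have hdet : A * C - B ^ 2 = heron x y z * (x2 * y3 * z1 + x3 * y1 * z2) / (x * y * z) := by
    rw [hA, hB, hC, heron]
    field_simp
    have e : z2 = x2 + y3 + z1 - x3 - y1 := by linarith
    rw [hx, hy, hz, e]
    ring
  have hM33 : A + C - 2 * B = (x + z - y) * x3 / x + (y + z - x) * y3 / y := by
    rw [hA, hB, hC]
    field_simp
    have e : z2 = x2 + y3 + z1 - x3 - y1 := by linarith
    rw [hx, hy, hz, e]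
    ring
  have hdet0 : 0 < A * C - B ^ 2 := by
    rw [hdet]; positivity
  have hpos : 0 < A ∨ 0 < C ∨ 0 < A + C - 2 * B := by
    -- A factor such as `x + y - z` is positive iff the angle at the corresponding vertex is acute,
    -- and two of these factors sum to twice a squared side length.
    rcases lt_or_ge 0 (x + y - z) with hc | hc
    · rcases le_or_gt 0 (y + z - x) with ha | ha
      · right; left; rw [hC]
        have := div_pos (mul_pos hc hx2) hx0
        have := div_nonneg (mul_nonneg ha hz2.le) hz0.le
        linarith
      · left; rw [hA]
        have := div_pos (mul_pos hc hy1) hy0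
        have := div_pos (mul_pos (show 0 < x + z - y by linarith) hz1) hz0
        linarith
    · right; right; rw [hM33]
      have := div_pos (mul_pos (show 0 < x + z - y by linarith) hx3) hx0
      have := div_pos (mul_pos (show 0 < y + z - x by linarith) hy3) hy0
      linarith
  obtain ⟨h1, h2⟩ := quad_form_neg hdet0 hpos (v1 - v3) (v2 - v3)
  rw [hQ']
  refine ⟨h1, fun h => ?_⟩
  obtain ⟨h3, h4⟩ := h2 h
  constructor <;> linarith

lemma heron_pos {a b c : ℝ} (ha : 0 < a) (hb : 0 < b) (hc : 0 < c) (h1 : a < b + c)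
    (h2 : b < a + c) (h3 : c < a + b) : 0 < heron (a ^ 2) (b ^ 2) (c ^ 2) := by
  have : heron (a ^ 2) (b ^ 2) (c ^ 2) = (a + b + c) * (b + c - a) * (a + c - b) * (a + b - c) := by
    rw [heron]; ring
  rw [this]
  have := sub_pos.mpr h1
  have := sub_pos.mpr h2
  have := sub_pos.mpr h3
  positivity

/-- The angle of a Euclidean triangle as a function of squared side lengths: `p, q` adjacent,
`o` opposite. -/
noncomputable def ang (p q o : ℝ) : ℝ := arccos ((p + q - o) / (2 * √p * √q))

lemma one_sub_cos_sq {p q o : ℝ} (hp : 0 < p) (hq : 0 < q) :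
    1 - ((p + q - o) / (2 * √p * √q)) ^ 2 = heron p q o / (4 * p * q) := by
  rw [div_pow, mul_pow, mul_pow, sq_sqrt hp.le, sq_sqrt hq.le, heron]
  field_simp
  ring

lemma abs_cos_lt_one {p q o : ℝ} (hp : 0 < p) (hq : 0 < q) (hH : 0 < heron p q o) :
    |(p + q - o) / (2 * √p * √q)| < 1 := by
  rw [← sq_lt_one_iff_abs_lt_one]
  have := one_sub_cos_sq (o := o) hp hq
  have : 0 < heron p q o / (4 * p * q) := by positivity
  linarith

lemma hasDerivAt_ang {p q o : ℝ → ℝ} {dp dq dO t : ℝ} (hp : HasDerivAt p dp t)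
    (hq : HasDerivAt q dq t) (ho : HasDerivAt o dO t) (hp0 : 0 < p t) (hq0 : 0 < q t)
    (hH : 0 < heron (p t) (q t) (o t)) :
    HasDerivAt (fun s => ang (p s) (q s) (o s))
      (dAng (p t) (q t) (o t) dp dq dO / √(heron (p t) (q t) (o t))) t := by
  have hlt := abs_lt.mp (abs_cos_lt_one hp0 hq0 hH)
  have hsp := Real.sqrt_pos.mpr hp0
  have hsq := Real.sqrt_pos.mpr hq0
  have hsH := Real.sqrt_pos.mpr hH
  have hnum := (hp.add hq).sub ho
  have hden := ((hp.sqrt hp0.ne').const_mul 2).mul (hq.sqrt hq0.ne')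
  have hne : 2 * √(p t) * √(q t) ≠ 0 := by positivity
  have hc := hnum.div hden hne
  have h := (hasDerivAt_arccos hlt.1.ne' hlt.2.ne).comp t hc
  refine h.congr_deriv ?_
  simp only [Pi.add_apply, Pi.sub_apply, Pi.mul_apply]
  rw [one_sub_cos_sq hp0 hq0, Real.sqrt_div hH.le, show 4 * p t * q t = (2 * √(p t) * √(q t)) ^ 2 by
    rw [mul_pow, mul_pow, sq_sqrt hp0.le, sq_sqrt hq0.le]; norm_num, Real.sqrt_sq (by positivity),
    dAng]
  have e1 := sq_sqrt hp0.le
  have e2 := sq_sqrt hq0.le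
  generalize √(heron (p t) (q t) (o t)) = w at *
  generalize √(p t) = a at *
  generalize √(q t) = b at *
  rw [← e1, ← e2]
  field_simp
  ring

/-- The angle sum of a Euclidean triangle, written in terms of `ang`. -/
lemma ang_sum {a b c : ℝ} (ha : 0 < a) (hb : 0 < b) (hc : 0 < c) (h1 : a < b + c)
    (h2 : b < a + c) (h3 : c < a + b) :
    ang (c ^ 2) (b ^ 2) (a ^ 2) + ang (a ^ 2) (c ^ 2) (b ^ 2) + ang (b ^ 2) (a ^ 2) (c ^ 2)
      = π := by
  have hH := heron_pos ha hb hc h1 h2 h3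
  have ha2 : 0 < a ^ 2 := by positivity
  have hb2 : 0 < b ^ 2 := by positivity
  have hc2 : 0 < c ^ 2 := by positivity
  have hH1 : heron (c ^ 2) (b ^ 2) (a ^ 2) = heron (a ^ 2) (b ^ 2) (c ^ 2) := by
    simp only [heron]; ring
  have hH2 : heron (a ^ 2) (c ^ 2) (b ^ 2) = heron (a ^ 2) (b ^ 2) (c ^ 2) := by
    simp only [heron]; ring
  have hA := abs_lt.mp (abs_cos_lt_one hc2 hb2 (by rwa [hH1]))
  have hB := abs_lt.mp (abs_cos_lt_one ha2 hc2 (by rwa [hH2]))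
  have sA := one_sub_cos_sq (o := a ^ 2) hc2 hb2
  have sB := one_sub_cos_sq (o := b ^ 2) ha2 hc2
  rw [hH1] at sA
  rw [hH2] at sB
  simp only [ang, Real.sqrt_sq ha.le, Real.sqrt_sq hb.le, Real.sqrt_sq hc.le] at *
  set A := (c ^ 2 + b ^ 2 - a ^ 2) / (2 * c * b) with hAdef
  set B := (a ^ 2 + c ^ 2 - b ^ 2) / (2 * a * c) with hBdef
  have hAB : 0 < A + B := by
    have : A + B = (a + b) * ((c - a + b) * (c + a - b)) / (2 * a * b * c) := by
      rw [hAdef, hBdef]; field_simp; ring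
    rw [this]
    have : 0 < c - a + b := by linarith
    have : 0 < c + a - b := by linarith
    positivity
  have hle : arccos A + arccos B ≤ π := by
    have : arccos A ≤ arccos (-B) := Real.arccos_le_arccos (by linarith)
    rw [Real.arccos_neg] at this
    linarith
  have hcos : cos (arccos A + arccos B) = -((b ^ 2 + a ^ 2 - c ^ 2) / (2 * b * a)) := by
    rw [Real.cos_add, Real.cos_arccos hA.1.le hA.2.le, Real.cos_arccos hB.1.le hB.2.le,
      Real.sin_arccos, Real.sin_arccos, ← Real.sqrt_mul (by rw [sA]; positivity), sA, sB,
      show heron (a ^ 2) (b ^ 2) (c ^ 2) / (4 * c ^ 2 * b ^ 2) *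
        (heron (a ^ 2) (b ^ 2) (c ^ 2) / (4 * a ^ 2 * c ^ 2)) =
        (heron (a ^ 2) (b ^ 2) (c ^ 2) / (4 * a * b * c ^ 2)) ^ 2 by field_simp,
      Real.sqrt_sq (by positivity), hAdef, hBdef, heron]
    field_simp
    ring
  have := Real.arccos_cos (add_nonneg (arccos_nonneg A) (arccos_nonneg B)) hle
  rw [hcos, Real.arccos_neg] at this
  linarith

/-! ### Faces and total curvature -/

/-- The expression under the square root in `len`; it is the squared edge length whenever it is
nonnegative. -/
def lsq (I : Finset (Fin N) → ℝ) (r : Fin N → ℝ) (i j : Fin N) : ℝ :=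
  r i ^ 2 + r j ^ 2 + 2 * r i * r j * I {i, j}

lemma lsq_comm (I : Finset (Fin N) → ℝ) (r : Fin N → ℝ) (i j : Fin N) :
    lsq I r i j = lsq I r j i := by
  rw [lsq, lsq, Finset.pair_comm]; ring

lemma len_comm (I : Finset (Fin N) → ℝ) (r : Fin N → ℝ) (i j : Fin N) :
    len I r i j = len I r j i := by
  rw [len, len, Finset.pair_comm]; ring_nf

lemma face_rot (i j k : Fin N) : ({j, k, i} : Finset (Fin N)) = {i, j, k} := by
  ext; simp; tauto

lemma face_swap (i j k : Fin N) : ({j, i, k} : Finset (Fin N)) = {i, j, k} := by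
  ext; simp; tauto

section
variable {Fc : Finset (Finset (Fin N))} {I : Finset (Fin N) → ℝ}

lemma pair_mem_edges (hT : IsTriangulation Fc) {i j k : Fin N}
    (h : ({i, j, k} : Finset (Fin N)) ∈ Fc) : ({i, j} : Finset (Fin N)) ∈ edges Fc := by
  have hc := hT.card3 _ h
  have hij : i ≠ j := by
    rintro rfl
    rw [Finset.insert_eq_of_mem (by simp)] at hc
    have := Finset.card_le_two (a := i) (b := k)
    omega
  refine Finset.mem_biUnion.mpr ⟨_, h, Finset.mem_powersetCard.mpr ⟨?_, Finset.card_pair hij⟩⟩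
  intro a; simp; tauto

lemma inversive_nonneg (hT : IsTriangulation Fc) (hI : ∀ e ∈ edges Fc, 0 ≤ I e) {i j k : Fin N}
    (h : ({i, j, k} : Finset (Fin N)) ∈ Fc) :
    0 ≤ I {j, k} ∧ 0 ≤ I {i, k} ∧ 0 ≤ I {i, j} := by
  refine ⟨hI _ (pair_mem_edges hT (k := i) ?_), hI _ (pair_mem_edges hT (k := j) ?_),
    hI _ (pair_mem_edges hT h)⟩
  · rwa [face_rot]
  · rwa [show ({i, k, j} : Finset (Fin N)) = {i, j, k} by ext; simp; tauto]

lemma lsq_pos {r : Fin N → ℝ} (hr : ∀ i, 0 < r i) {i j : Fin N} (h : 0 ≤ I {i, j}) :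
    0 < lsq I r i j := by
  have := hr i
  have := hr j
  rw [lsq]; positivity

lemma lsq_face_pos (hT : IsTriangulation Fc) (hI : ∀ e ∈ edges Fc, 0 ≤ I e) {r : Fin N → ℝ}
    (hr : ∀ i, 0 < r i) {i j k : Fin N} (h : ({i, j, k} : Finset (Fin N)) ∈ Fc) :
    0 < lsq I r j k ∧ 0 < lsq I r i k ∧ 0 < lsq I r i j := by
  obtain ⟨h1, h2, h3⟩ := inversive_nonneg hT hI h
  exact ⟨lsq_pos hr h1, lsq_pos hr h2, lsq_pos hr h3⟩

lemma len_eq (I : Finset (Fin N) → ℝ) (r : Fin N → ℝ) (i j : Fin N) :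
    len I r i j = √(lsq I r i j) := rfl

lemma arccos_cosAng (hT : IsTriangulation Fc) (hI : ∀ e ∈ edges Fc, 0 ≤ I e) {r : Fin N → ℝ}
    (hr : ∀ i, 0 < r i) {i j k : Fin N} (h : ({i, j, k} : Finset (Fin N)) ∈ Fc) :
    arccos (cosAng I r i j k) = ang (lsq I r i j) (lsq I r i k) (lsq I r j k) := by
  obtain ⟨h1, h2, h3⟩ := lsq_face_pos hT hI hr h
  rw [cosAng, ang, len_eq, len_eq, len_eq, sq_sqrt h1.le, sq_sqrt h2.le, sq_sqrt h3.le]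

lemma len_face (hT : IsTriangulation Fc) (hI : ∀ e ∈ edges Fc, 0 ≤ I e) {r : Fin N → ℝ}
    (hr : r ∈ Omega Fc I) {i j k : Fin N} (h : ({i, j, k} : Finset (Fin N)) ∈ Fc) :
    0 < len I r j k ∧ 0 < len I r i k ∧ 0 < len I r i j ∧
      len I r j k < len I r i k + len I r i j ∧ len I r i k < len I r j k + len I r i j ∧
      len I r i j < len I r j k + len I r i k := by
  obtain ⟨h1, h2, h3⟩ := lsq_face_pos hT hI hr.1 h
  refine ⟨Real.sqrt_pos.mpr h1, Real.sqrt_pos.mpr h2, Real.sqrt_pos.mpr h3, ?_, ?_, ?_⟩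
  · have := hr.2 i j k h
    linarith
  · have := hr.2 j i k (by rwa [face_swap])
    rw [len_comm I r j i] at this
    linarith
  · have := hr.2 k i j (by rwa [face_rot k i j] at h)
    rw [len_comm I r k i, len_comm I r k j] at this
    linarith

lemma face_heron_pos (hT : IsTriangulation Fc) (hI : ∀ e ∈ edges Fc, 0 ≤ I e) {r : Fin N → ℝ}
    (hr : r ∈ Omega Fc I) {i j k : Fin N} (h : ({i, j, k} : Finset (Fin N)) ∈ Fc) :
    0 < heron (lsq I r j k) (lsq I r i k) (lsq I r i j) := by
  obtain ⟨h1, h2, h3, h4, h5, h6⟩ := len_face hT hI hr h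
  obtain ⟨p1, p2, p3⟩ := lsq_face_pos hT hI hr.1 h
  have := heron_pos h1 h2 h3 h4 h5 h6
  rwa [len_eq, len_eq, len_eq, sq_sqrt p1.le, sq_sqrt p2.le, sq_sqrt p3.le] at this

/-- The three angles of a face in terms of the same three squared lengths, so that `hasDerivAt_ang`
and `ang_sum` apply without further use of the symmetry of `lsq`. -/
lemma arccos_cosAng_cyc (hT : IsTriangulation Fc) (hI : ∀ e ∈ edges Fc, 0 ≤ I e) {r : Fin N → ℝ}
    (hr : ∀ i, 0 < r i) {i j k : Fin N} (h : ({i, j, k} : Finset (Fin N)) ∈ Fc) :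
    arccos (cosAng I r i j k) = ang (lsq I r i j) (lsq I r i k) (lsq I r j k) ∧
    arccos (cosAng I r j k i) = ang (lsq I r j k) (lsq I r i j) (lsq I r i k) ∧
    arccos (cosAng I r k i j) = ang (lsq I r i k) (lsq I r j k) (lsq I r i j) := by
  refine ⟨arccos_cosAng hT hI hr h, ?_, ?_⟩
  · rw [arccos_cosAng hT hI hr (by rwa [face_rot]), lsq_comm I r j i, lsq_comm I r k i]
  · rw [arccos_cosAng hT hI hr (by rwa [face_rot k i j] at h), lsq_comm I r k i,
      lsq_comm I r k j]

lemma face_angle_sum (hT : IsTriangulation Fc) (hI : ∀ e ∈ edges Fc, 0 ≤ I e) {r : Fin N → ℝ}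
    (hr : r ∈ Omega Fc I) {i j k : Fin N} (h : ({i, j, k} : Finset (Fin N)) ∈ Fc) :
    arccos (cosAng I r i j k) + arccos (cosAng I r j k i) + arccos (cosAng I r k i j) = π := by
  obtain ⟨h1, h2, h3, h4, h5, h6⟩ := len_face hT hI hr h
  obtain ⟨p1, p2, p3⟩ := lsq_face_pos hT hI hr.1 h
  have := ang_sum h1 h2 h3 h4 h5 h6
  rw [len_eq, len_eq, len_eq, sq_sqrt p1.le, sq_sqrt p2.le, sq_sqrt p3.le] at this
  obtain ⟨e1, e2, e3⟩ := arccos_cosAng_cyc hT hI hr.1 h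
  rw [e1, e2, e3, this]

lemma rOf_pos (u : Fin N → ℝ) (i : Fin N) : 0 < rOf u i := Real.exp_pos _

lemma sum_rot (g : Fin N → Fin N → Fin N → ℝ) :
    ∑ i, ∑ j, ∑ k, g j k i = ∑ i, ∑ j, ∑ k, g i j k := by
  rw [Finset.sum_comm]
  refine Finset.sum_congr rfl fun j _ => ?_
  rw [Finset.sum_comm]

/-- The pairing `∑ vᵢ Kᵢ` as a sum over faces. Each face occurs for all six orderings of its
vertices, whence the factor `1 / 6`. -/
lemma sum_mul_K (Fc : Finset (Finset (Fin N))) (I : Finset (Fin N) → ℝ) (r v : Fin N → ℝ) :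
    ∑ i, v i * K Fc I r i = 2 * π * ∑ i, v i - (1 / 6) * ∑ i, ∑ j, ∑ k,
      (if ({i, j, k} : Finset (Fin N)) ∈ Fc then
        v i * arccos (cosAng I r i j k) + v j * arccos (cosAng I r j k i)
          + v k * arccos (cosAng I r k i j) else 0) := by
  set g : Fin N → Fin N → Fin N → ℝ := fun i j k =>
    if ({i, j, k} : Finset (Fin N)) ∈ Fc then v i * arccos (cosAng I r i j k) else 0 with hg
  have h1 : ∑ i, v i * K Fc I r i = 2 * π * ∑ i, v i - (1 / 2) * ∑ i, ∑ j, ∑ k, g i j k := by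
    rw [Finset.mul_sum, Finset.mul_sum, ← Finset.sum_sub_distrib]
    refine Finset.sum_congr rfl fun i _ => ?_
    rw [K, mul_sub]
    congr 1
    · ring
    · rw [mul_left_comm, Finset.mul_sum]
      congr 1
      refine Finset.sum_congr rfl fun j _ => ?_
      rw [Finset.mul_sum]
      refine Finset.sum_congr rfl fun k _ => ?_
      rw [hg, mul_ite, mul_zero]
  have h2 : ∀ i j k, (if ({i, j, k} : Finset (Fin N)) ∈ Fc then
        v i * arccos (cosAng I r i j k) + v j * arccos (cosAng I r j k i)
          + v k * arccos (cosAng I r k i j) else 0) = g i j k + g j k i + g k i j := by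
    intro i j k
    simp only [hg, face_rot i j k, ← face_rot k i j]
    split_ifs <;> simp
  simp only [h2, Finset.sum_add_distrib]
  rw [h1, sum_rot g, sum_rot (fun i j k => g j k i), sum_rot g]
  ring

/-- The total curvature is the same for all metrics in `Ω`, because the angles of every face sum to
`π`. Its value `2πχ(M)` is not needed: a constant curvature metric attains it by definition. -/
lemma sum_K_const (hT : IsTriangulation Fc) (hI : ∀ e ∈ edges Fc, 0 ≤ I e) {r r' : Fin N → ℝ}
    (hr : r ∈ Omega Fc I) (hr' : r' ∈ Omega Fc I) : ∑ i, K Fc I r i = ∑ i, K Fc I r' i := by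
  have e1 := sum_mul_K Fc I r 1
  have e2 := sum_mul_K Fc I r' 1
  simp only [Pi.one_apply, one_mul] at e1 e2
  rw [e1, e2]
  congr 2
  refine Finset.sum_congr rfl fun i _ => Finset.sum_congr rfl fun j _ =>
    Finset.sum_congr rfl fun k _ => ?_
  split_ifs with h
  · rw [face_angle_sum hT hI hr h, face_angle_sum hT hI hr' h]
  · rfl

lemma hasDerivAt_rOf (u v : Fin N → ℝ) (i : Fin N) :
    HasDerivAt (fun t : ℝ => rOf (u + t • v) i) (rOf u i * v i) 0 := by
  have h : HasDerivAt (fun t : ℝ => u i + t * v i) (v i) 0 := by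
    simpa using ((hasDerivAt_id (0 : ℝ)).mul_const (v i)).const_add (u i)
  simpa [rOf] using h.exp

lemma hasDerivAt_lsq (I : Finset (Fin N) → ℝ) (u v : Fin N → ℝ) (i j : Fin N) :
    HasDerivAt (fun t : ℝ => lsq I (rOf (u + t • v)) i j)
      (2 * ((rOf u i ^ 2 + rOf u i * rOf u j * I {i, j}) * v i
        + (rOf u j ^ 2 + rOf u i * rOf u j * I {i, j}) * v j)) 0 := by
  have hi := hasDerivAt_rOf u v i
  have hj := hasDerivAt_rOf u v j
  have h := ((hi.pow 2).add (hj.pow 2)).add (((hi.const_mul 2).mul hj).mul_const (I {i, j}))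
  refine h.congr_deriv ?_
  simp
  ring

/-- The contribution of one face to the derivative of `∑ vᵢ θᵢ` in the direction `v` is nonpositive,
and zero only if `v` is constant on the face. -/
lemma face_form (hT : IsTriangulation Fc) (hI : ∀ e ∈ edges Fc, 0 ≤ I e) {u : Fin N → ℝ}
    (hu : rOf u ∈ Omega Fc I) (v : Fin N → ℝ) {i j k : Fin N}
    (h : ({i, j, k} : Finset (Fin N)) ∈ Fc) :
    ∃ Q : ℝ, HasDerivAt (fun t : ℝ => v i * arccos (cosAng I (rOf (u + t • v)) i j k)
        + v j * arccos (cosAng I (rOf (u + t • v)) j k i)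
        + v k * arccos (cosAng I (rOf (u + t • v)) k i j)) Q 0 ∧ Q ≤ 0 ∧
      (Q = 0 → v i = v j ∧ v j = v k) := by
  obtain ⟨p1, p2, p3⟩ := lsq_face_pos hT hI hu.1 h
  obtain ⟨I1, I2, I3⟩ := inversive_nonneg hT hI h
  have hH := face_heron_pos hT hI hu h
  have d1 := hasDerivAt_lsq I u v j k
  have d2 := hasDerivAt_lsq I u v i k
  have d3 := hasDerivAt_lsq I u v i j
  have hi := rOf_pos u i
  have hj := rOf_pos u j
  have hk := rOf_pos u k
  have hsH := Real.sqrt_pos.mpr hH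
  have H1 : heron (lsq I (rOf u) i j) (lsq I (rOf u) i k) (lsq I (rOf u) j k)
    = heron (lsq I (rOf u) j k) (lsq I (rOf u) i k) (lsq I (rOf u) i j) := by
    simp only [heron]; ring
  have H2 : heron (lsq I (rOf u) j k) (lsq I (rOf u) i j) (lsq I (rOf u) i k)
    = heron (lsq I (rOf u) j k) (lsq I (rOf u) i k) (lsq I (rOf u) i j) := by
    simp only [heron]; ring
  have H3 : heron (lsq I (rOf u) i k) (lsq I (rOf u) j k) (lsq I (rOf u) i j)
    = heron (lsq I (rOf u) j k) (lsq I (rOf u) i k) (lsq I (rOf u) i j) := by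
    simp only [heron]; ring
  have z0 : u + (0 : ℝ) • v = u := by simp
  have a1 := (hasDerivAt_ang d3 d2 d1 (by rwa [z0]) (by rwa [z0])
    (by simp only [z0]; rwa [H1])).const_mul (v i)
  have a2 := (hasDerivAt_ang d1 d3 d2 (by rwa [z0]) (by rwa [z0])
    (by simp only [z0]; rwa [H2])).const_mul (v j)
  have a3 := (hasDerivAt_ang d2 d1 d3 (by rwa [z0]) (by rwa [z0])
    (by simp only [z0]; rwa [H3])).const_mul (v k)
  have a := (a1.add a2).add a3
  simp only [z0, H1, H2, H3] at a
  -- The derivative of the squared length of `{a, b}` is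
  -- `2 * ((r_a ^ 2 + r_a r_b I) v_a + (r_b ^ 2 + r_a r_b I) v_b)`, which gives the splitting.
  obtain ⟨q1, q2⟩ := triangle_form_neg
    (x2 := rOf u j ^ 2 + rOf u j * rOf u k * I {j, k})
    (x3 := rOf u k ^ 2 + rOf u j * rOf u k * I {j, k})
    (y1 := rOf u i ^ 2 + rOf u i * rOf u k * I {i, k})
    (y3 := rOf u k ^ 2 + rOf u i * rOf u k * I {i, k})
    (z1 := rOf u i ^ 2 + rOf u i * rOf u j * I {i, j})
    (z2 := rOf u j ^ 2 + rOf u i * rOf u j * I {i, j})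
    (by positivity) (by positivity) (by positivity) (by positivity) (by positivity)
    (by positivity) (by ring) (x := lsq I (rOf u) j k) (y := lsq I (rOf u) i k)
    (z := lsq I (rOf u) i j) (by rw [lsq]; ring) (by rw [lsq]; ring) (by rw [lsq]; ring) hH
    (v i) (v j) (v k) rfl rfl rfl rfl
  refine ⟨_, ?_, div_nonpos_of_nonpos_of_nonneg q1 hsH.le, fun h0 => q2 ?_⟩
  · refine HasDerivAt.congr_of_eventuallyEq (a.congr_deriv ?_) (.of_forall fun t => ?_)
    · rw [add_div, add_div, mul_div_assoc, mul_div_assoc, mul_div_assoc]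
    · obtain ⟨e1, e2, e3⟩ := arccos_cosAng_cyc hT hI (rOf_pos (u + t • v)) h
      simp only [e1, e2, e3, Pi.add_apply]
  · exact (div_eq_zero_iff.mp h0).resolve_right hsH.ne'

end

section
variable {Fc : Finset (Finset (Fin N))} {I : Finset (Fin N) → ℝ} {α : ℝ}

/-! ### The vector field and its linearisation -/

/-- The α-flow vector field in logarithmic coordinates. -/
noncomputable def field (Fc : Finset (Finset (Fin N))) (I : Finset (Fin N) → ℝ) (α : ℝ)
    (u : Fin N → ℝ) (i : Fin N) : ℝ :=
  sA Fc α (rOf u) * rOf u i ^ α - K Fc I (rOf u) i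

lemma rOf_rpow (u : Fin N → ℝ) (i : Fin N) : rOf u i ^ α = exp (u i * α) :=
  (Real.exp_mul _ _).symm

lemma sum_exp_pos [Nonempty (Fin N)] (u : Fin N → ℝ) : 0 < ∑ i, exp (u i * α) :=
  Finset.sum_pos (fun _ _ => Real.exp_pos _) Finset.univ_nonempty

lemma contDiffAt_ang {E : Type*} [NormedAddCommGroup E] [NormedSpace ℝ E] {p q o : E → ℝ} {x : E}
    (hp : ContDiffAt ℝ 1 p x) (hq : ContDiffAt ℝ 1 q x) (ho : ContDiffAt ℝ 1 o x)
    (hp0 : 0 < p x) (hq0 : 0 < q x) (hH : 0 < heron (p x) (q x) (o x)) :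
    ContDiffAt ℝ 1 (fun y => ang (p y) (q y) (o y)) x := by
  have hlt := abs_lt.mp (abs_cos_lt_one hp0 hq0 hH)
  have hne : 2 * √(p x) * √(q x) ≠ 0 := by
    have := Real.sqrt_pos.mpr hp0
    have := Real.sqrt_pos.mpr hq0
    positivity
  have h := ((hp.add hq).sub ho).div
    ((contDiffAt_const (c := (2 : ℝ)).mul (hp.sqrt hp0.ne')).mul (hq.sqrt hq0.ne')) hne
  exact ContDiffAt.comp x (contDiffAt_arccos hlt.1.ne' hlt.2.ne) h

lemma contDiff_lsq (I : Finset (Fin N) → ℝ) (i j : Fin N) :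
    ContDiff ℝ 1 (fun u : Fin N → ℝ => lsq I (rOf u) i j) := by
  unfold lsq rOf
  fun_prop

lemma contDiffAt_field [Nonempty (Fin N)] (hT : IsTriangulation Fc)
    (hI : ∀ e ∈ edges Fc, 0 ≤ I e) {u : Fin N → ℝ} (hu : rOf u ∈ Omega Fc I) :
    ContDiffAt ℝ 1 (field Fc I α) u := by
  refine contDiffAt_pi.mpr fun i => ?_
  unfold field sA
  simp only [rOf_rpow]
  refine ContDiffAt.sub (ContDiffAt.mul (ContDiffAt.div contDiffAt_const (by fun_prop)
    (sum_exp_pos u).ne') (by fun_prop)) ?_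
  unfold K
  refine contDiffAt_const.sub (contDiffAt_const.mul
    (ContDiffAt.sum fun j _ => ContDiffAt.sum fun k _ => ?_))
  by_cases h : ({i, j, k} : Finset (Fin N)) ∈ Fc
  · simp only [h, if_true]
    simp only [fun v : Fin N → ℝ => arccos_cosAng hT hI (rOf_pos v) h]
    obtain ⟨p1, p2, p3⟩ := lsq_face_pos hT hI hu.1 h
    refine contDiffAt_ang (contDiff_lsq I _ _).contDiffAt (contDiff_lsq I _ _).contDiffAt
      (contDiff_lsq I _ _).contDiffAt p3 p2 ?_
    have := face_heron_pos hT hI hu h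
    simp only [heron] at this ⊢
    linarith
  · simp only [h, if_false]
    exact contDiffAt_const

/-- The vector field preserves `∑ uᵢ`: the first term sums to `2πχ(M)`, and so does the curvature,
since its sum is constant on `Ω` and equals `2πχ(M)` at the constant curvature metric. -/
lemma sum_field_eq_zero [Nonempty (Fin N)] (hT : IsTriangulation Fc)
    (hI : ∀ e ∈ edges Fc, 0 ≤ I e)
    {rstar : Fin N → ℝ} (hrs : rstar ∈ Omega Fc I)
    (hconst : ∀ i : Fin N, K Fc I rstar i = sA Fc α rstar * rstar i ^ α)
    {u : Fin N → ℝ} (hu : rOf u ∈ Omega Fc I) : ∑ i, field Fc I α u i = 0 := by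
  have key : ∀ r : Fin N → ℝ, (∀ i, 0 < r i) →
      ∑ i, sA Fc α r * r i ^ α = 2 * π * chi Fc := by
    intro r hr
    have : 0 < ∑ i, r i ^ α :=
      Finset.sum_pos (fun i _ => Real.rpow_pos_of_pos (hr i) _) Finset.univ_nonempty
    rw [← Finset.mul_sum, sA, div_mul_cancel₀ _ this.ne']
  have h1 : ∑ i, K Fc I rstar i = 2 * π * chi Fc := by
    rw [← key rstar hrs.1]
    exact Finset.sum_congr rfl fun i _ => hconst i
  simp only [field]
  rw [Finset.sum_sub_distrib, key _ hu.1, sum_K_const hT hI hu hrs, h1, sub_self]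

lemma eq_of_edge (hT : IsTriangulation Fc) {v : Fin N → ℝ}
    (hv : ∀ i j k : Fin N, ({i, j, k} : Finset (Fin N)) ∈ Fc → v i = v j)
    {i j : Fin N} (hij : i ≠ j) (h : ({i, j} : Finset (Fin N)) ∈ edges Fc) : v i = v j := by
  obtain ⟨f, hf, hef⟩ := Finset.mem_biUnion.mp h
  obtain ⟨hsub, -⟩ := Finset.mem_powersetCard.mp hef
  have hcard : (f \ {i, j}).card = 1 := by
    rw [Finset.card_sdiff_of_subset hsub, hT.card3 f hf, Finset.card_pair hij]
  obtain ⟨k, hk⟩ := Finset.card_eq_one.mp hcard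
  refine hv i j k ?_
  have : ({i, j, k} : Finset (Fin N)) = f := by
    rw [← Finset.sdiff_union_of_subset hsub, hk]
    ext; simp; tauto
  rwa [this]

/-- A vector constant on every face is constant, since the 1-skeleton is connected. -/
lemma const_of_faces (hT : IsTriangulation Fc) {v : Fin N → ℝ}
    (hv : ∀ i j k : Fin N, ({i, j, k} : Finset (Fin N)) ∈ Fc → v i = v j) (i j : Fin N) :
    v i = v j := by
  have h := (SimpleGraph.reachable_iff_reflTransGen i j).mp (hT.conn.preconnected i j)
  induction h with
  | refl => rfl
  | tail _ hadj ih =>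
    rw [ih]
    obtain ⟨hne, h | h⟩ := (SimpleGraph.fromRel_adj _ _ _).mp hadj
    · exact eq_of_edge hT hv hne h
    · exact (eq_of_edge hT hv hne.symm h).symm

/-- The derivative of `s_α ∑ vᵢ rᵢ ^ α` in the direction `v`, with `c` in place of `χ(M)`, is `α * c`
times a positive multiple of the gap in the Cauchy–Schwarz inequality
`(∑ vᵢ rᵢ ^ α)² ≤ (∑ vᵢ² rᵢ ^ α) * ∑ rᵢ ^ α`. This is where the sign of `αχ(M)` enters. -/
lemma hasDerivAt_weight [Nonempty (Fin N)] (u v : Fin N → ℝ) {c : ℝ} (hc : α * c ≤ 0) :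
    ∃ Q : ℝ, HasDerivAt (fun t : ℝ => 2 * π * c / (∑ j, rOf (u + t • v) j ^ α) *
      ∑ i, v i * rOf (u + t • v) i ^ α) Q 0 ∧ Q ≤ 0 := by
  have hd : ∀ i, HasDerivAt (fun t : ℝ => rOf (u + t • v) i ^ α)
      (α * (v i * exp (u i * α))) 0 := by
    intro i
    simp only [rOf_rpow]
    have h : HasDerivAt (fun t : ℝ => (u i + t * v i) * α) (v i * α) 0 := by
      simpa using (((hasDerivAt_id (0 : ℝ)).mul_const (v i)).const_add (u i)).mul_const α
    have h2 := h.exp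
    simp only [Pi.add_apply, Pi.smul_apply, smul_eq_mul]
    refine h2.congr_deriv ?_
    rw [zero_mul, add_zero]; ring
  have hS := HasDerivAt.fun_sum (u := Finset.univ) fun i _ => hd i
  have hP := HasDerivAt.fun_sum (u := Finset.univ) fun i _ => (hd i).const_mul (v i)
  have hpos := sum_exp_pos (α := α) u
  have z0 : ∀ i, rOf (u + (0 : ℝ) • v) i ^ α = exp (u i * α) := by
    intro i; rw [rOf_rpow]; simp
  have h := ((hasDerivAt_const (0 : ℝ) (2 * π * c)).fun_div hS
    (by simpa only [z0] using hpos.ne')).fun_mul hP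
  refine ⟨_, h, ?_⟩
  simp only [z0]
  set W := ∑ i, exp (u i * α) with hW
  have e1 : ∑ i, α * (v i * exp (u i * α)) = α * ∑ i, v i * exp (u i * α) := by
    rw [Finset.mul_sum]
  have e2 : ∑ i, v i * (α * (v i * exp (u i * α))) = α * ∑ i, v i ^ 2 * exp (u i * α) := by
    rw [Finset.mul_sum]
    exact Finset.sum_congr rfl fun i _ => by ring
  rw [e1, e2]
  have hCS : (∑ i, v i * exp (u i * α)) ^ 2 ≤ (∑ i, v i ^ 2 * exp (u i * α)) * W := by
    refine Finset.sum_sq_le_sum_mul_sum_of_sq_le_mul _ (fun i _ => by positivity)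
      (fun i _ => by positivity) fun i _ => le_of_eq (by ring)
  set P := ∑ i, v i * exp (u i * α)
  set R := ∑ i, v i ^ 2 * exp (u i * α)
  have e3 : ∀ X : ℝ, X = 2 * π * (α * c) * (R * W - P ^ 2) / W ^ 2 → X ≤ 0 := by
    rintro _ rfl
    refine div_nonpos_of_nonpos_of_nonneg (mul_nonpos_of_nonpos_of_nonneg ?_ ?_) (sq_nonneg _)
    · exact mul_nonpos_of_nonneg_of_nonpos (by positivity) hc
    · linarith
  apply e3
  field_simp
  ring

/-- The linearisation of the vector field is negative on nonzero vectors with zero sum: the weight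
term and every face contribute nonpositively, and if all faces contribute zero then `v` is
constant, hence zero. -/
lemma field_form_neg (hT : IsTriangulation Fc) (hI : ∀ e ∈ edges Fc, 0 ≤ I e)
    (hαχ : α * (chi Fc : ℝ) ≤ 0) {u : Fin N → ℝ} (hu : rOf u ∈ Omega Fc I) {v : Fin N → ℝ}
    (hv : ∑ i, v i = 0) (hv0 : v ≠ 0) :
    ∃ Q : ℝ, HasDerivAt (fun t : ℝ => ∑ i, v i * field Fc I α (u + t • v) i) Q 0 ∧ Q < 0 := by
  have : Nonempty (Fin N) := hT.conn.nonempty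
  obtain ⟨Q₁, hQ₁, hQ₁'⟩ := hasDerivAt_weight u v hαχ
  have hface : ∀ i j k : Fin N, ∃ Q : ℝ, HasDerivAt (fun t : ℝ =>
      if ({i, j, k} : Finset (Fin N)) ∈ Fc then
        v i * arccos (cosAng I (rOf (u + t • v)) i j k)
        + v j * arccos (cosAng I (rOf (u + t • v)) j k i)
        + v k * arccos (cosAng I (rOf (u + t • v)) k i j) else 0) Q 0 ∧ Q ≤ 0 ∧
      (Q = 0 → ({i, j, k} : Finset (Fin N)) ∈ Fc → v i = v j) := by
    intro i j k
    by_cases h : ({i, j, k} : Finset (Fin N)) ∈ Fc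
    · simp only [h, if_true]
      obtain ⟨Q, h1, h2, h3⟩ := face_form hT hI hu v h
      exact ⟨Q, h1, h2, fun h0 _ => (h3 h0).1⟩
    · simp only [h, if_false]
      exact ⟨0, hasDerivAt_const _ _, le_rfl, fun _ h' => h'.elim⟩
  choose q hq hq0 hqe using hface
  have hsum := HasDerivAt.fun_sum (u := Finset.univ) fun i _ =>
    HasDerivAt.fun_sum (u := Finset.univ) fun j _ =>
      HasDerivAt.fun_sum (u := Finset.univ) fun k _ => hq i j k
  refine ⟨Q₁ + (1 / 6) * ∑ i, ∑ j, ∑ k, q i j k, ?_, ?_⟩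
  · refine (hQ₁.add (hsum.const_mul (1 / 6))).congr_of_eventuallyEq (.of_forall fun t => ?_)
    have h1 : ∑ i, v i * field Fc I α (u + t • v) i
        = sA Fc α (rOf (u + t • v)) * ∑ i, v i * rOf (u + t • v) i ^ α
          - ∑ i, v i * K Fc I (rOf (u + t • v)) i := by
      rw [Finset.mul_sum, ← Finset.sum_sub_distrib]
      exact Finset.sum_congr rfl fun i _ => by rw [field]; ring
    simp only [Pi.add_apply]
    rw [h1, sum_mul_K, hv, sA]
    ring
  · have hle : ∑ i, ∑ j, ∑ k, q i j k ≤ 0 :=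
      Finset.sum_nonpos fun i _ => Finset.sum_nonpos fun j _ => Finset.sum_nonpos fun k _ =>
        hq0 i j k
    refine lt_of_le_of_ne (by linarith) fun h0 => hv0 ?_
    have h1 : ∑ i, ∑ j, ∑ k, q i j k = 0 := by linarith
    have h2 : ∀ i j k, q i j k = 0 := by
      intro i j k
      have a := (Finset.sum_eq_zero_iff_of_nonpos (fun i _ => Finset.sum_nonpos fun j _ =>
        Finset.sum_nonpos fun k _ => hq0 i j k)).mp h1 i (Finset.mem_univ _)
      have b := (Finset.sum_eq_zero_iff_of_nonpos (fun j _ =>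
        Finset.sum_nonpos fun k _ => hq0 i j k)).mp a j (Finset.mem_univ _)
      exact (Finset.sum_eq_zero_iff_of_nonpos (fun k _ => hq0 i j k)).mp b k (Finset.mem_univ _)
    have hc := const_of_faces hT fun i j k h => hqe i j k (h2 i j k) h
    funext i
    have : ∑ j, v j = N * v i := by
      rw [Finset.sum_congr rfl fun j _ => hc j i]
      simp
    rw [hv] at this
    have hN : (N : ℝ) ≠ 0 := by
      have := i.pos
      positivity
    exact (mul_eq_zero.mp this.symm).resolve_left hN

lemma fderiv_field_form_neg (hT : IsTriangulation Fc) (hI : ∀ e ∈ edges Fc, 0 ≤ I e)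
    (hαχ : α * (chi Fc : ℝ) ≤ 0) {u : Fin N → ℝ} (hu : rOf u ∈ Omega Fc I)
    {L : (Fin N → ℝ) →L[ℝ] (Fin N → ℝ)} (hL : HasFDerivAt (field Fc I α) L u) {v : Fin N → ℝ}
    (hv : ∑ i, v i = 0) (hv0 : v ≠ 0) : ∑ i, v i * L v i < 0 := by
  obtain ⟨Q, hQ, hneg⟩ := field_form_neg hT hI hαχ hu hv hv0
  have hline : HasDerivAt (fun t : ℝ => u + t • v) v 0 := by
    simpa using ((hasDerivAt_id (0 : ℝ)).smul_const v).const_add u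
  have hL' : HasFDerivAt (field Fc I α) L (u + (0 : ℝ) • v) := by simpa using hL
  have h1 := hasDerivAt_pi.mp (hL'.comp_hasDerivAt (0 : ℝ) hline)
  have h2 := HasDerivAt.fun_sum (u := Finset.univ) fun i _ => (h1 i).const_mul (v i)
  rw [h2.unique hQ]
  exact hneg

lemma isOpen_Omega (Fc : Finset (Finset (Fin N))) (I : Finset (Fin N) → ℝ) :
    IsOpen (Omega Fc I) := by
  have hlen : ∀ i j, Continuous fun r : Fin N → ℝ => len I r i j := by
    intro i j; unfold len; fun_prop
  have : Omega Fc I = (⋂ i, {r | 0 < r i}) ∩ ⋂ i, ⋂ j, ⋂ k,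
      {r | ({i, j, k} : Finset (Fin N)) ∈ Fc → len I r j k < len I r i j + len I r i k} := by
    ext r; simp [Omega]
  rw [this]
  refine (isOpen_iInter_of_finite fun i => isOpen_lt (by fun_prop) (by fun_prop)).inter
    (isOpen_iInter_of_finite fun i => isOpen_iInter_of_finite fun j =>
      isOpen_iInter_of_finite fun k => ?_)
  by_cases h : ({i, j, k} : Finset (Fin N)) ∈ Fc
  · simp only [h, forall_const]
    exact isOpen_lt (hlen j k) ((hlen i j).add (hlen i k))
  · simp [h]

lemma continuous_rOf : Continuous (rOf : (Fin N → ℝ) → Fin N → ℝ) := by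
  unfold rOf; fun_prop

end

/-! ### Exponential decay and global existence near a dissipative zero

Throughout, `us` is a point of `ℝ^N`, later the logarithm of the constant curvature metric, and the
distance to it is measured by the Lyapunov function `∑ (xᵢ - usᵢ)²`. -/

section
variable {us : Fin N → ℝ} {ρ : ℝ}

/-- Decay of the Lyapunov function along a solution. The dissipation estimate is only available
while `∑ (wᵢ - usᵢ)² ≤ ρ²`. It nevertheless suffices: the Lyapunov function cannot cross the barrier
`ρ² exp (-β t)`, since at a contact point it decreases at rate at least `2 β` times its value, which
is strictly faster than the barrier. -/
lemma decay {G : (Fin N → ℝ) → Fin N → ℝ} {β : ℝ} (hρ : 0 < ρ) (hβ : 0 < β)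
    (hG : ∀ x : Fin N → ℝ, ∑ i, (x i - us i) = 0 → ∑ i, (x i - us i) ^ 2 ≤ ρ ^ 2 →
      ∑ i, (x i - us i) * G x i ≤ -β * ∑ i, (x i - us i) ^ 2)
    {w : ℝ → Fin N → ℝ}
    (hw : ∀ t : ℝ, 0 ≤ t → ∀ i, HasDerivWithinAt (fun s => w s i) (G (w t) i) (Set.Ici 0) t)
    (hsum : ∀ t : ℝ, 0 ≤ t → ∑ i, (w t i - us i) = 0)
    (h0 : ∑ i, (w 0 i - us i) ^ 2 ≤ ρ ^ 2) {t : ℝ} (ht : 0 ≤ t) :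
    ∑ i, (w t i - us i) ^ 2 ≤ ρ ^ 2 * exp (-β * t) := by
  have hder : ∀ x : ℝ, 0 ≤ x → HasDerivWithinAt (fun s => ∑ i, (w s i - us i) ^ 2)
      (2 * ∑ i, (w x i - us i) * G (w x) i) (Set.Ici 0) x := by
    intro x hx
    have := HasDerivWithinAt.fun_sum (u := Finset.univ)
      fun i _ => (((hw x hx i).sub_const (us i)).pow 2)
    refine this.congr_deriv ?_
    rw [Finset.mul_sum]
    refine Finset.sum_congr rfl fun i _ => ?_
    push_cast
    ring
  have hB : ∀ x : ℝ, HasDerivAt (fun s => ρ ^ 2 * exp (-β * s))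
      (-β * (ρ ^ 2 * exp (-β * x))) x := by
    intro x
    have := (((hasDerivAt_id x).const_mul (-β)).exp).const_mul (ρ ^ 2)
    refine this.congr_deriv ?_
    simp; ring
  refine image_le_of_deriv_right_lt_deriv_boundary (a := 0) (b := t)
    (fun x hx => ((hder x hx.1).continuousWithinAt).mono fun y hy => hy.1)
    (fun x hx => (hder x hx.1).mono fun y hy => le_trans hx.1 hy) (by simpa using h0) hB
    (fun x hx hfx => ?_) ⟨ht, le_rfl⟩
  have hpos : 0 < ρ ^ 2 * exp (-β * x) := by positivity
  have hle : ∑ i, (w x i - us i) ^ 2 ≤ ρ ^ 2 := by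
    rw [hfx]
    have : exp (-β * x) ≤ 1 := Real.exp_le_one_iff.mpr (by nlinarith [hx.1])
    nlinarith [sq_nonneg ρ]
  have := hG (w x) (hsum x hx.1) hle
  rw [hfx] at this
  nlinarith [mul_pos hβ hpos]

lemma sum_conserved {G : (Fin N → ℝ) → Fin N → ℝ} {w : ℝ → Fin N → ℝ}
    (hw : ∀ t : ℝ, 0 ≤ t → ∀ i, HasDerivWithinAt (fun s => w s i) (G (w t) i) (Set.Ici 0) t)
    (hG : ∀ t : ℝ, 0 ≤ t → ∑ i, G (w t) i = 0) {t : ℝ} (ht : 0 ≤ t) :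
    ∑ i, w t i = ∑ i, w 0 i := by
  have hder : ∀ x : ℝ, 0 ≤ x → HasDerivWithinAt (fun s => ∑ i, w s i) 0 (Set.Ici 0) x := by
    intro x hx
    have := HasDerivWithinAt.fun_sum (u := Finset.univ) fun i _ => hw x hx i
    rwa [hG x hx] at this
  exact constant_of_has_deriv_right_zero (a := 0) (b := t)
    (fun x hx => ((hder x hx.1).continuousWithinAt).mono fun y hy => hy.1)
    (fun x hx => (hder x hx.1).mono fun y hy => le_trans hx.1 hy) t ⟨ht, le_rfl⟩

open scoped NNReal in
/-- A bounded Lipschitz vector field has a solution on `[0, ∞)`: Picard–Lindelöf solutions on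
`[0, T]` exist for every `T` and are glued by uniqueness. -/
lemma exists_global_solution {G : (Fin N → ℝ) → Fin N → ℝ} {κ L : ℝ≥0} (hG : LipschitzWith κ G)
    (hL : ∀ x, ‖G x‖ ≤ L) (x₀ : Fin N → ℝ) :
    ∃ w : ℝ → Fin N → ℝ, w 0 = x₀ ∧
      ∀ t : ℝ, 0 ≤ t → HasDerivWithinAt w (G (w t)) (Set.Ici 0) t := by
  have hex : ∀ T : ℝ≥0, ∃ α : ℝ → Fin N → ℝ, α 0 = x₀ ∧
      ∀ t ∈ Set.Icc (0 : ℝ) T, HasDerivWithinAt α (G (α t)) (Set.Icc (0 : ℝ) T) t := by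
    intro T
    have hPL : IsPicardLindelof (fun _ => G) (tmin := 0) (tmax := T)
        ⟨0, le_rfl, T.2⟩ x₀ (L * T) 0 L κ := by
      refine .of_time_independent (fun x _ => hL x) hG.lipschitzOnWith ?_
      simp
    exact hPL.exists_eq_forall_mem_Icc_hasDerivWithinAt₀
  choose α hα0 hα using hex
  have huniq : ∀ S T : ℝ≥0, S ≤ T → Set.EqOn (α S) (α T) (Set.Icc (0 : ℝ) S) := by
    intro S T hST
    have hTS : ((S : ℝ)) ≤ T := hST
    refine ODE_solution_unique_of_mem_Icc_right (v := fun _ => G) (s := fun _ => Set.univ) (K := κ)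
      (fun t _ => hG.lipschitzOnWith)
      (fun t ht => (hα S t ht).continuousWithinAt) (fun t ht => ?_) (fun _ _ => trivial)
      (fun t ht => ((hα T t ⟨ht.1, ht.2.trans hTS⟩).continuousWithinAt).mono
        (Set.Icc_subset_Icc_right hTS)) (fun t ht => ?_) (fun _ _ => trivial)
      (by rw [hα0, hα0])
    · exact (hα S t ⟨ht.1, ht.2.le⟩).mono_of_mem_nhdsWithin
        (mem_of_superset (Icc_mem_nhdsGE ht.2) (Set.Icc_subset_Icc_left ht.1))
    · exact (hα T t ⟨ht.1, ht.2.le.trans hTS⟩).mono_of_mem_nhdsWithin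
        (mem_of_superset (Icc_mem_nhdsGE (ht.2.trans_le hTS)) (Set.Icc_subset_Icc_left ht.1))
  -- The horizon `t + 1` leaves room to the right of `t` for the derivative at `t`.
  set w : ℝ → Fin N → ℝ := fun t => α (t.toNNReal + 1) t with hw
  have hwT : ∀ T : ℝ≥0, ∀ t ∈ Set.Icc (0 : ℝ) T, w t = α T t := by
    intro T t ht
    rcases le_total (t.toNNReal + 1) T with h | h
    · exact huniq _ _ h ⟨ht.1, by push_cast; rw [Real.coe_toNNReal t ht.1]; linarith⟩
    · exact (huniq _ _ h ht).symm
  refine ⟨w, ?_, fun t ht => ?_⟩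
  · rw [hwT 0 0 (by simp), hα0]
  · have htT : t < ((t.toNNReal + 1 : ℝ≥0) : ℝ) := by
      push_cast; rw [Real.coe_toNNReal t ht]; linarith
    have h1 := (hα (t.toNNReal + 1) t ⟨ht, htT.le⟩)
    have h2 := h1.congr (fun s hs => hwT _ s hs) (hwT _ t ⟨ht, htT.le⟩)
    refine h2.mono_of_mem_nhdsWithin ?_
    filter_upwards [self_mem_nhdsWithin, mem_nhdsWithin_of_mem_nhds (Iio_mem_nhds htT)] with s h3 h4
    exact ⟨h3, h4.le⟩

/-- Coordinatewise truncation, a retraction onto the closed sup-norm ball of radius `ρ` about `us`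
(for `ρ ≥ 0`). -/
noncomputable def clamp (us : Fin N → ℝ) (ρ : ℝ) (x : Fin N → ℝ) : Fin N → ℝ :=
  fun i => max (us i - ρ) (min (us i + ρ) (x i))

lemma clamp_mem (hρ : 0 ≤ ρ) (x : Fin N → ℝ) : clamp us ρ x ∈ Metric.closedBall us ρ := by
  rw [Metric.mem_closedBall, dist_pi_le_iff hρ]
  intro i
  rw [Real.dist_eq, abs_le, clamp]
  constructor
  · linarith [le_max_left (us i - ρ) (min (us i + ρ) (x i))]
  · have : max (us i - ρ) (min (us i + ρ) (x i)) ≤ us i + ρ :=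
      max_le (by linarith) (min_le_left _ _)
    linarith

lemma clamp_eq {x : Fin N → ℝ} (hρ : 0 ≤ ρ) (hx : x ∈ Metric.closedBall us ρ) :
    clamp us ρ x = x := by
  rw [Metric.mem_closedBall, dist_pi_le_iff hρ] at hx
  funext i
  have := hx i
  rw [Real.dist_eq, abs_le] at this
  rw [clamp, min_eq_right (by linarith), max_eq_right (by linarith)]

lemma clamp_lipschitz : LipschitzWith 1 (clamp us ρ) := by
  refine LipschitzWith.of_dist_le_mul fun x y => ?_
  rw [NNReal.coe_one, one_mul, dist_pi_le_iff dist_nonneg]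
  intro i
  have h := ((LipschitzWith.id (α := ℝ)).const_min (us i + ρ)).const_max (us i - ρ)
  have := h.dist_le_mul (x i) (y i)
  rw [NNReal.coe_one, one_mul] at this
  exact this.trans (dist_le_pi_dist x y i)

lemma mem_closedBall_of_sum_sq {x : Fin N → ℝ} (hρ : 0 ≤ ρ)
    (h : ∑ i, (x i - us i) ^ 2 ≤ ρ ^ 2) : x ∈ Metric.closedBall us ρ := by
  rw [Metric.mem_closedBall, dist_pi_le_iff hρ]
  intro i
  rw [Real.dist_eq]
  refine abs_le_of_sq_le_sq ?_ hρ
  exact (Finset.single_le_sum (f := fun i => (x i - us i) ^ 2) (fun i _ => sq_nonneg _)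
    (Finset.mem_univ i)).trans h

open scoped NNReal in
/-- Global existence near `us` for a field that is Lipschitz only on a ball. The field is composed
with the retraction `clamp`, which makes it bounded and globally Lipschitz; by `decay` the resulting
global solution never leaves the ball, where the composition agrees with the original field. -/
lemma exists_confined_solution {F : (Fin N → ℝ) → Fin N → ℝ} {β : ℝ} (hρ : 0 < ρ) (hβ : 0 < β)
    {κ : ℝ≥0} (hF : LipschitzOnWith κ F (Metric.closedBall us ρ))
    (hF0 : ∀ x ∈ Metric.closedBall us ρ, ∑ i, F x i = 0)
    (hdiss : ∀ x : Fin N → ℝ, ∑ i, (x i - us i) = 0 → ∑ i, (x i - us i) ^ 2 ≤ ρ ^ 2 →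
      ∑ i, (x i - us i) * F x i ≤ -β * ∑ i, (x i - us i) ^ 2)
    {x₀ : Fin N → ℝ} (hx₀ : ∑ i, (x₀ i - us i) = 0) (hx₀' : ∑ i, (x₀ i - us i) ^ 2 ≤ ρ ^ 2) :
    ∃ w : ℝ → Fin N → ℝ, w 0 = x₀ ∧ ∀ t : ℝ, 0 ≤ t → w t ∈ Metric.closedBall us ρ ∧
      ∀ i, HasDerivWithinAt (fun s => w s i) (F (w t) i) (Set.Ici 0) t := by
  set G : (Fin N → ℝ) → Fin N → ℝ := F ∘ clamp us ρ with hGdef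
  have hGL : LipschitzWith κ G := by
    have := hF.comp (clamp_lipschitz (us := us) (ρ := ρ)).lipschitzOnWith (s := Set.univ)
      (fun x _ => clamp_mem hρ.le x)
    rw [mul_one] at this
    exact lipschitzOnWith_univ.mp this
  have hGB : ∀ x, ‖G x‖ ≤ (‖F us‖₊ + κ * ρ.toNNReal : ℝ≥0) := by
    intro x
    have h1 := hF.dist_le_mul _ (clamp_mem hρ.le x) us (Metric.mem_closedBall_self hρ.le)
    have h2 := Metric.mem_closedBall.mp (clamp_mem (us := us) hρ.le x)
    have h3 : ‖G x‖ ≤ ‖F us‖ + dist (F (clamp us ρ x)) (F us) := by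
      rw [dist_eq_norm]
      calc ‖G x‖ = ‖F us + (F (clamp us ρ x) - F us)‖ := by simp [hGdef]
        _ ≤ _ := norm_add_le _ _
    push_cast
    rw [Real.coe_toNNReal ρ hρ.le]
    have := mul_le_mul_of_nonneg_left h2 κ.2
    simp only [NNReal.val_eq_coe] at this
    linarith
  obtain ⟨w, hw0, hw⟩ := exists_global_solution hGL hGB x₀
  have hw' : ∀ t : ℝ, 0 ≤ t → ∀ i,
      HasDerivWithinAt (fun s => w s i) (G (w t) i) (Set.Ici 0) t :=
    fun t ht => hasDerivWithinAt_pi.mp (hw t ht)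
  have hsum : ∀ t : ℝ, 0 ≤ t → ∑ i, (w t i - us i) = 0 := by
    intro t ht
    rw [Finset.sum_sub_distrib, sum_conserved hw' (fun t _ => hF0 _ (clamp_mem hρ.le _)) ht, hw0,
      ← Finset.sum_sub_distrib, hx₀]
  have hmem : ∀ t : ℝ, 0 ≤ t → w t ∈ Metric.closedBall us ρ := by
    intro t ht
    refine mem_closedBall_of_sum_sq hρ.le ((decay (G := G) hρ hβ ?_ hw' hsum ?_ ht).trans ?_)
    · intro x hx hx'
      have : G x = F x := by
        rw [hGdef, Function.comp_apply, clamp_eq hρ.le (mem_closedBall_of_sum_sq hρ.le hx')]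
      rw [this]
      exact hdiss x hx hx'
    · rwa [hw0]
    · have : exp (-β * t) ≤ 1 := Real.exp_le_one_iff.mpr (by nlinarith)
      nlinarith [sq_nonneg ρ]
  refine ⟨w, hw0, fun t ht => ⟨hmem t ht, fun i => ?_⟩⟩
  have := hw' t ht i
  rwa [hGdef, Function.comp_apply, clamp_eq hρ.le (hmem t ht)] at this

/-- If the linearisation at a zero `us` of `F` is negative on nonzero vectors with zero sum, then
`F` satisfies a dissipation estimate near `us` on the hyperplane of displacements with zero sum.
The linear estimate is uniform by compactness of the unit sphere, and half of its constant absorbs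
the remainder. -/
lemma exists_dissipative {F : (Fin N → ℝ) → Fin N → ℝ} {L : (Fin N → ℝ) →L[ℝ] (Fin N → ℝ)}
    (hL : HasFDerivAt F L us) (hF : F us = 0)
    (hneg : ∀ v : Fin N → ℝ, ∑ i, v i = 0 → v ≠ 0 → ∑ i, v i * L v i < 0) :
    ∃ β : ℝ, 0 < β ∧ ∀ᶠ x in 𝓝 us, ∑ i, (x i - us i) = 0 →
      ∑ i, (x i - us i) * F x i ≤ -β * ∑ i, (x i - us i) ^ 2 := by
  obtain ⟨c, hc, hcq⟩ : ∃ c : ℝ, 0 < c ∧ ∀ v : Fin N → ℝ, ∑ i, v i = 0 →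
      ∑ i, v i * L v i ≤ -c * ∑ i, v i ^ 2 := by
    set S : Set (Fin N → ℝ) := {v | ∑ i, v i = 0 ∧ ∑ i, v i ^ 2 = 1} with hS
    have hcl : IsClosed S := (isClosed_eq (by fun_prop) (by fun_prop)).inter
      (isClosed_eq (by fun_prop) (by fun_prop))
    have hcomp : IsCompact S := by
      refine (isCompact_closedBall (0 : Fin N → ℝ) 1).of_isClosed_subset hcl fun v hv => ?_
      exact mem_closedBall_of_sum_sq zero_le_one (by simpa using hv.2.le)
    have hcont : Continuous fun v : Fin N → ℝ => ∑ i, v i * L v i := by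
      have := L.continuous
      fun_prop
    have hscale : ∀ v : Fin N → ℝ, ∑ i, v i = 0 → v ≠ 0 →
        ∃ s : ℝ, ∑ i, v i ^ 2 = s ^ 2 ∧ ∃ y ∈ S, v = s • y := by
      intro v hv hv0
      have hpos : 0 < ∑ i, v i ^ 2 := by
        obtain ⟨i, hi⟩ := Function.ne_iff.mp hv0
        exact Finset.sum_pos' (fun i _ => sq_nonneg _) ⟨i, Finset.mem_univ i, by
          have : v i ≠ 0 := hi
          positivity⟩
      have hs := Real.sqrt_pos.mpr hpos
      refine ⟨√(∑ i, v i ^ 2), (sq_sqrt hpos.le).symm, (√(∑ i, v i ^ 2))⁻¹ • v, ⟨?_, ?_⟩, ?_⟩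
      · simp [← Finset.mul_sum, hv]
      · simp only [Pi.smul_apply, smul_eq_mul, mul_pow, ← Finset.mul_sum, inv_pow,
          sq_sqrt hpos.le]
        exact inv_mul_cancel₀ hpos.ne'
      · rw [smul_smul, mul_inv_cancel₀ hs.ne', one_smul]
    rcases S.eq_empty_or_nonempty with hE | hne
    · refine ⟨1, one_pos, fun v hv => ?_⟩
      by_cases hv0 : v = 0
      · simp [hv0]
      · obtain ⟨s, -, y, hy, -⟩ := hscale v hv hv0
        rw [hE] at hy
        exact hy.elim
    · obtain ⟨y, hy, hmax⟩ := hcomp.exists_isMaxOn hne hcont.continuousOn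
      have hy0 : y ≠ 0 := by
        rintro rfl
        simpa using hy.2
      refine ⟨-∑ i, y i * L y i, neg_pos.mpr (hneg y hy.1 hy0), fun v hv => ?_⟩
      by_cases hv0 : v = 0
      · simp [hv0]
      · obtain ⟨s, hs, z, hz, rfl⟩ := hscale v hv hv0
        have h1 : ∑ i, z i * L z i ≤ ∑ i, y i * L y i := hmax hz
        have h2 : ∑ i, (s • z) i * L (s • z) i = s ^ 2 * ∑ i, z i * L z i := by
          rw [Finset.mul_sum]
          refine Finset.sum_congr rfl fun i _ => ?_
          simp; ring
        rw [hs, h2]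
        nlinarith [sq_nonneg s]
  refine ⟨c / 2, by positivity, ?_⟩
  -- The remainder is estimated in each of the `N` coordinates; `N + 1` keeps the bound nonzero.
  have hε : 0 < c / (2 * (N + 1)) := by positivity
  filter_upwards [(hasFDerivAt_iff_isLittleO.mp hL).def hε] with x hx hsum
  rw [hF, sub_zero] at hx
  have hq := hcq (x - us) (by simpa using hsum)
  set S2 := ∑ i, (x i - us i) ^ 2 with hS2
  have hS2' : 0 ≤ S2 := Finset.sum_nonneg fun i _ => sq_nonneg _
  simp only [Pi.sub_apply] at hq
  have hcoord : ∀ i, |x i - us i| ≤ ‖x - us‖ := fun i => by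
    simpa using norm_le_pi_norm (x - us) i
  have hnorm : ‖x - us‖ ^ 2 ≤ S2 := by
    have : ‖x - us‖ ≤ √S2 := by
      rw [pi_norm_le_iff_of_nonneg (Real.sqrt_nonneg _)]
      intro i
      rw [Pi.sub_apply, Real.norm_eq_abs]
      refine Real.abs_le_sqrt ?_
      exact Finset.single_le_sum (f := fun i => (x i - us i) ^ 2) (fun i _ => sq_nonneg _)
        (Finset.mem_univ i)
    calc ‖x - us‖ ^ 2 ≤ √S2 ^ 2 := by gcongr
      _ = S2 := sq_sqrt hS2'
  have hrem : ∑ i, (x i - us i) * (F x i - L (x - us) i) ≤ c / 2 * S2 := by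
    have h1 : ∀ i ∈ (Finset.univ : Finset (Fin N)),
        (x i - us i) * (F x i - L (x - us) i) ≤ c / (2 * (N + 1)) * S2 := by
      intro i _
      have h2 : |F x i - L (x - us) i| ≤ c / (2 * (N + 1)) * ‖x - us‖ :=
        (norm_le_pi_norm (F x - L (x - us)) i).trans hx
      calc (x i - us i) * (F x i - L (x - us) i)
          ≤ |x i - us i| * |F x i - L (x - us) i| := by rw [← abs_mul]; exact le_abs_self _
        _ ≤ ‖x - us‖ * (c / (2 * (N + 1)) * ‖x - us‖) := by
            gcongr
            exact hcoord i
        _ = c / (2 * (N + 1)) * ‖x - us‖ ^ 2 := by ring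
        _ ≤ _ := by gcongr
    refine (Finset.sum_le_sum h1).trans ?_
    rw [Finset.sum_const, Finset.card_univ, Fintype.card_fin, nsmul_eq_mul]
    have : (N : ℝ) * (c / (2 * (N + 1)) * S2) = (N / (N + 1)) * (c / 2 * S2) := by field_simp
    rw [this]
    refine mul_le_of_le_one_left (by positivity) ?_
    rw [div_le_one (by positivity)]
    linarith
  have hsplit : ∑ i, (x i - us i) * F x i
      = ∑ i, (x i - us i) * L (x - us) i + ∑ i, (x i - us i) * (F x i - L (x - us) i) := by
    rw [← Finset.sum_add_distrib]
    exact Finset.sum_congr rfl fun i _ => by ring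
  rw [hsplit]
  linarith

end

/-! ### Stability of the constant curvature metric -/

lemma abs_exp_sub_one_le (d : ℝ) : |exp d - 1| ≤ |d| * exp |d| := by
  have h1 := Real.add_one_le_exp d
  have h2 := Real.add_one_le_exp (-d)
  have h3 := Real.exp_pos d
  have h4 : exp d * exp (-d) = 1 := by rw [← Real.exp_add]; simp
  rcases le_total 0 d with h | h
  · rw [abs_of_nonneg h, abs_of_nonneg (by linarith)]
    nlinarith
  · rw [abs_of_nonpos h, abs_of_nonpos (by have := Real.exp_le_one_iff.mpr h; linarith)]
    nlinarith

/-- Passing from logarithmic coordinates back to radii costs only a constant factor. -/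
lemma norm_rOf_sub_le {us x : Fin N → ℝ} {ρ δ : ℝ} (hδ : 0 ≤ δ) (hδρ : δ ≤ ρ)
    (hx : x ∈ Metric.closedBall us δ) : ‖rOf x - rOf us‖ ≤ ‖rOf us‖ * exp ρ * δ := by
  rw [pi_norm_le_iff_of_nonneg (by positivity)]
  intro i
  rw [Metric.mem_closedBall, dist_pi_le_iff hδ] at hx
  have hi := hx i
  rw [Real.dist_eq] at hi
  have h1 : rOf x i - rOf us i = rOf us i * (exp (x i - us i) - 1) := by
    rw [mul_sub, rOf, rOf, ← Real.exp_add]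
    simp
  rw [Pi.sub_apply, h1, norm_mul, mul_assoc]
  refine mul_le_mul (norm_le_pi_norm _ i) ?_ (norm_nonneg _) (norm_nonneg _)
  refine (abs_exp_sub_one_le _).trans ?_
  rw [mul_comm]
  gcongr
  exact hi.trans hδρ

/-- local stability when αχ(M) ≤ 0: if αχ(M) ≤ 0 and r* ∈ Ω has
constant α-curvature, then solutions starting near r* (with the same product
of radii) exist for all t ≥ 0 and converge exponentially fast to r*. -/
theorem stmt5 {N : ℕ} (Fc : Finset (Finset (Fin N))) (hT : IsTriangulation Fc)
    (I : Finset (Fin N) → ℝ) (hI : ∀ e ∈ edges Fc, 0 ≤ I e) (α : ℝ)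
    (hαχ : α * (chi Fc : ℝ) ≤ 0)
    (rstar : Fin N → ℝ) (hrs : rstar ∈ Omega Fc I)
    (hconst : ∀ i : Fin N, K Fc I rstar i = sA Fc α rstar * rstar i ^ α) :
    ∃ U ∈ nhds rstar, U ⊆ Omega Fc I ∧
      (∀ u : ℝ → Fin N → ℝ, IsFlowSol Fc I α (Set.Ici 0) u →
        rOf (u 0) ∈ U → (∏ i, Real.exp (u 0 i)) = ∏ i, rstar i →
        ∃ C β : ℝ, 0 < C ∧ 0 < β ∧ ∀ t : ℝ, 0 ≤ t →
          ‖rOf (u t) - rstar‖ ≤ C * Real.exp (-β * t)) ∧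
      (∀ u0 : Fin N → ℝ, rOf u0 ∈ U → (∏ i, Real.exp (u0 i)) = ∏ i, rstar i →
        ∃ u : ℝ → Fin N → ℝ, u 0 = u0 ∧ IsFlowSol Fc I α (Set.Ici 0) u) := by
  have : Nonempty (Fin N) := hT.conn.nonempty
  set us : Fin N → ℝ := fun i => log (rstar i) with hus
  have hrus : rOf us = rstar := funext fun i => Real.exp_log (hrs.1 i)
  have hΩ : rOf us ∈ Omega Fc I := hrus ▸ hrs
  have hF0 : field Fc I α us = 0 := by
    funext i
    rw [field, hrus, hconst i, sub_self, Pi.zero_apply]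
  have hC := contDiffAt_field (α := α) hT hI hΩ
  obtain ⟨κ, s, hs, hLip⟩ := hC.exists_lipschitzOnWith
  have hL := (hC.differentiableAt one_ne_zero).hasFDerivAt
  obtain ⟨β, hβ, hdiss⟩ := exists_dissipative hL hF0 fun v hv hv0 =>
    fderiv_field_form_neg hT hI hαχ hΩ hL hv hv0
  have hΩev : ∀ᶠ x in 𝓝 us, rOf x ∈ Omega Fc I :=
    continuous_rOf.continuousAt.eventually ((isOpen_Omega Fc I).mem_nhds hΩ)
  obtain ⟨ρ, hρ, hball⟩ := Metric.nhds_basis_closedBall.eventually_iff.mp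
    ((hdiss.and hΩev).and hs)
  have hball1 : ∀ x : Fin N → ℝ, ∑ i, (x i - us i) = 0 → ∑ i, (x i - us i) ^ 2 ≤ ρ ^ 2 →
      ∑ i, (x i - us i) * field Fc I α x i ≤ -β * ∑ i, (x i - us i) ^ 2 := fun x hx hx' =>
    (hball (mem_closedBall_of_sum_sq hρ.le hx')).1.1 hx
  have hball2 : ∀ x ∈ Metric.closedBall us ρ, rOf x ∈ Omega Fc I := fun x hx => (hball hx).1.2
  have hball3 : LipschitzOnWith κ (field Fc I α) (Metric.closedBall us ρ) :=
    hLip.mono fun x hx => (hball hx).2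
  have hprod : ∀ x : Fin N → ℝ, (∏ i, exp (x i)) = ∏ i, rstar i → ∑ i, (x i - us i) = 0 := by
    intro x hx
    have h : ∏ i, rstar i = exp (∑ i, us i) := by
      rw [Real.exp_sum, ← hrus]
      rfl
    rw [h, ← Real.exp_sum] at hx
    rw [Finset.sum_sub_distrib, Real.exp_injective hx, sub_self]
  have hlog : ∀ (x : Fin N → ℝ) i, log (rOf x i) = x i := fun x i => Real.log_exp _
  refine ⟨{r | r ∈ Omega Fc I ∧ ∑ i, (log (r i) - us i) ^ 2 ≤ ρ ^ 2}, ?_, fun r hr => hr.1, ?_, ?_⟩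
  · have hcont : ContinuousAt (fun r : Fin N → ℝ => ∑ i, (log (r i) - us i) ^ 2) rstar := by
      refine tendsto_finsetSum _ fun i _ => ?_
      exact (((continuousAt_apply i rstar).log (hrs.1 i).ne').sub continuousAt_const).pow 2
    refine ((isOpen_Omega Fc I).mem_nhds hrs |> Filter.inter_mem) ?_
    refine (hcont.eventually_lt continuousAt_const ?_).mono fun r hr => le_of_lt hr
    simp only [hus, sub_self]
    simpa using pow_pos hρ 2
  · intro u hu hu0 hup
    have hw : ∀ t : ℝ, 0 ≤ t → ∀ i,
        HasDerivWithinAt (fun s => u s i) (field Fc I α (u t) i) (Set.Ici 0) t :=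
      fun t ht => (hu t ht).2
    have hsum : ∀ t : ℝ, 0 ≤ t → ∑ i, (u t i - us i) = 0 := by
      intro t ht
      rw [Finset.sum_sub_distrib, sum_conserved hw (fun t ht =>
        sum_field_eq_zero hT hI hrs hconst (hu t ht).1) ht, ← Finset.sum_sub_distrib]
      exact hprod _ hup
    have h0 : ∑ i, (u 0 i - us i) ^ 2 ≤ ρ ^ 2 := by
      have := hu0.2
      simpa only [hlog] using this
    refine ⟨‖rOf us‖ * exp ρ * ρ + 1, β / 2, by positivity, by positivity, fun t ht => ?_⟩
    have hle : exp (-(β / 2) * t) ≤ 1 := Real.exp_le_one_iff.mpr (by nlinarith)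
    -- `V` decays at rate `β`, hence each coordinate of `u - us` decays at rate `β / 2`.
    have hV := decay hρ hβ hball1 hw hsum h0 ht
    have hsq : ρ ^ 2 * exp (-β * t) = (ρ * exp (-(β / 2) * t)) ^ 2 := by
      rw [mul_pow, ← Real.exp_nat_mul]
      congr 2
      push_cast
      ring
    rw [hsq] at hV
    have h := norm_rOf_sub_le (us := us) (by positivity)
      (mul_le_of_le_one_right hρ.le hle) (mem_closedBall_of_sum_sq (by positivity) hV)
    rw [hrus] at h ⊢
    have hexp := Real.exp_pos (-(β / 2) * t)
    linarith
  · intro u0 hu0 hup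
    have h0 : ∑ i, (u0 i - us i) ^ 2 ≤ ρ ^ 2 := by
      have := hu0.2
      simpa only [hlog] using this
    obtain ⟨w, hw0, hw⟩ := exists_confined_solution hρ hβ hball3
      (fun x hx => sum_field_eq_zero hT hI hrs hconst (hball2 x hx)) hball1 (hprod _ hup) h0
    exact ⟨w, hw0, fun t ht => ⟨hball2 _ (hw t ht).1, (hw t ht).2⟩⟩

end IDCP
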